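/- Suppose 1/s₁ + 1/s₂ = 1 and a > 0 is sufficiently small. Then W_a(1/2) = 1/2 + ra, W_a²(1/2) = −ra(s₂+qa) + 1/2 + ra, and for every m with 3 ≤ m ≤ k(a), W_a^m(1/2) = −a²(s₁+pa)^{m−2}·(r(qs₁+ps₂−p−q)+rpqa)/(s₁+pa−1) + (s₁−1+pa−2ra)/(2(s₁+pa−1)). -/

import Mathlib

open MeasureTheory Filter Topology

/-- The W-like map `W_a` with parameters `s₁ s₂ p q r` and perturbation `a`. -/
noncomputable def Wmap (s₁ s₂ p q r a : ℝ) (x : ℝ) : ℝ :=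
  if x < 1/2 - (1/2 + r*a)/(s₁ + p*a) then
    1 - (2*(s₁ + p*a)/(s₁ - 1 + p*a - 2*r*a)) * x
  else if x < 1/2 then
    (s₁ + p*a)*(x - 1/2) + 1/2 + r*a
  else if x < 1/2 + (1/2 + r*a)/(s₂ + q*a) then
    -(s₂ + q*a)*(x - 1/2) + 1/2 + r*a
  else
    1 + (2*(s₂ + q*a)/(s₂ - 1 + q*a - 2*r*a)) * (x - 1)

/-- `k(a)`: the first iterate `j ≥ 1` at which the trajectory of `1/2` under `W_a`
drops below `1/2 − (1/2+ra)/(s₁+pa)`. -/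
noncomputable def kIndex (s₁ s₂ p q r a : ℝ) : ℕ :=
  sInf {j : ℕ | 1 ≤ j ∧
    (Wmap s₁ s₂ p q r a)^[j] (1/2) ≤ 1/2 - (1/2 + r*a)/(s₁ + p*a)}

/-!
On its second branch `W_a` is affine with slope `S = s₁ + p a` and fixed point `x* < 1/2`, so it
multiplies the deviation from `x*` by `S > 1`. The orbit of `1/2` first visits the third branch,
of slope `-T` with `T = s₂ + q a`, and lands at `W_a²(1/2) = x* - r a (S T - S - T) / (S - 1)`.
Since `s₁ + s₂ = s₁ s₂`, the excess `S T - S - T` is `a` times a quantity that is positive for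
small `a`. Hence `W_a²(1/2) ≤ x*`, and from there on the orbit moves down the second branch,
its deviation from `x*` growing geometrically, until time `k(a)`.
-/

theorem iterate_eq_add_pow_mul_sub {R : Type*} [CommRing R] [PartialOrder R] [IsOrderedRing R]
    {f : R → R} {z c x : R} {n : ℕ} (hc : 0 ≤ c) (hx : x ≤ z)
    (hf : ∀ j < n, f^[j] x ≤ z → f (f^[j] x) = z + c * (f^[j] x - z)) :
    f^[n] x = z + c ^ n * (x - z) := by
  induction n with
  | zero => simp
  | succ n ih =>
    have formula : f^[n] x = z + c ^ n * (x - z) := ih fun j hj => hf j (hj.trans n.lt_succ_self)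
    have le_fixed : f^[n] x ≤ z := by
      rw [formula]
      exact add_le_of_nonpos_right
        (mul_nonpos_of_nonneg_of_nonpos (pow_nonneg hc n) (sub_nonpos.2 hx))
    rw [Function.iterate_succ_apply', hf n n.lt_succ_self le_fixed, formula]
    ring

section Branches

variable {s₁ s₂ p q r a x : ℝ}

theorem Wmap_of_mem_second_branch (hx : 1 / 2 - (1 / 2 + r * a) / (s₁ + p * a) ≤ x)
    (hx' : x < 1 / 2) :
    Wmap s₁ s₂ p q r a x = (s₁ + p * a) * (x - 1 / 2) + 1 / 2 + r * a := by
  rw [Wmap, if_neg hx.not_gt, if_pos hx']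

theorem Wmap_of_mem_third_branch (hS : 0 ≤ (1 / 2 + r * a) / (s₁ + p * a)) (hx : 1 / 2 ≤ x)
    (hx' : x < 1 / 2 + (1 / 2 + r * a) / (s₂ + q * a)) :
    Wmap s₁ s₂ p q r a x = -(s₂ + q * a) * (x - 1 / 2) + 1 / 2 + r * a := by
  rw [Wmap, if_neg (by linarith), if_neg hx.not_gt, if_pos hx']

/-- The fixed point `x*` of the affine map `x ↦ (s₁ + p a)(x - 1/2) + 1/2 + r a` which gives the
second branch of `W_a`; the iterates of `1/2` are measured from it. For `s₁ + p a = 1`, where there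
is no such point in general, the value is `1/2`. -/
noncomputable def secondBranchFixedPoint (s₁ p r a : ℝ) : ℝ :=
  1 / 2 - r * a / (s₁ + p * a - 1)

theorem secondBranchFixedPoint_eq_div (hS : s₁ + p * a ≠ 1) :
    secondBranchFixedPoint s₁ p r a = (s₁ - 1 + p * a - 2 * r * a) / (2 * (s₁ + p * a - 1)) := by
  have hS' : s₁ + p * a - 1 ≠ 0 := sub_ne_zero.2 hS
  rw [secondBranchFixedPoint, div_sub_div _ _ two_ne_zero hS']
  ring

theorem secondBranchFixedPoint_lt_half (hS : 1 < s₁ + p * a) (hra : 0 < r * a) :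
    secondBranchFixedPoint s₁ p r a < 1 / 2 :=
  sub_lt_self _ (div_pos hra (sub_pos.2 hS))

theorem Wmap_eq_fixedPoint_add_mul_sub (hS : s₁ + p * a ≠ 1)
    (hx : 1 / 2 - (1 / 2 + r * a) / (s₁ + p * a) ≤ x) (hx' : x < 1 / 2) :
    Wmap s₁ s₂ p q r a x = secondBranchFixedPoint s₁ p r a +
      (s₁ + p * a) * (x - secondBranchFixedPoint s₁ p r a) := by
  have hS' : s₁ + p * a - 1 ≠ 0 := sub_ne_zero.2 hS
  rw [Wmap_of_mem_second_branch hx hx', secondBranchFixedPoint]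
  linear_combination -(div_mul_cancel₀ (r * a) hS')

end Branches

section Orbit

variable {s₁ s₂ p q r a : ℝ}

theorem Wmap_half (hS : 0 < s₁ + p * a) (hT : 0 < s₂ + q * a) (hra : 0 ≤ r * a) :
    Wmap s₁ s₂ p q r a (1 / 2) = 1 / 2 + r * a := by
  have hT' : 0 < (1 / 2 + r * a) / (s₂ + q * a) := by positivity
  rw [Wmap_of_mem_third_branch (by positivity) le_rfl (lt_add_of_pos_right _ hT')]
  ring

theorem Wmap_iterate_two_half (hS : 0 < s₁ + p * a) (hT : 0 < s₂ + q * a) (hra : 0 ≤ r * a)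
    (hsmall : r * a * (s₂ + q * a) < 1 / 2 + r * a) :
    (Wmap s₁ s₂ p q r a)^[2] (1 / 2) = -(r * a) * (s₂ + q * a) + 1 / 2 + r * a := by
  have hlt : r * a < (1 / 2 + r * a) / (s₂ + q * a) := (lt_div_iff₀ hT).2 hsmall
  rw [Function.iterate_succ_apply', Function.iterate_one, Wmap_half hS hT hra,
    Wmap_of_mem_third_branch (by positivity) (le_add_of_nonneg_right hra) (by gcongr)]
  ring

theorem lt_Wmap_iterate_of_lt_kIndex {j : ℕ} (hj : 1 ≤ j) (hjk : j < kIndex s₁ s₂ p q r a) :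
    1 / 2 - (1 / 2 + r * a) / (s₁ + p * a) < (Wmap s₁ s₂ p q r a)^[j] (1 / 2) :=
  lt_of_not_ge fun hle => Nat.notMem_of_lt_sInf hjk ⟨hj, hle⟩

theorem Wmap_iterate_add_two_half {n : ℕ} (hS : 1 < s₁ + p * a) (hra : 0 < r * a)
    (hle : (Wmap s₁ s₂ p q r a)^[2] (1 / 2) ≤ secondBranchFixedPoint s₁ p r a)
    (hn : n + 2 ≤ kIndex s₁ s₂ p q r a) :
    (Wmap s₁ s₂ p q r a)^[n + 2] (1 / 2) = secondBranchFixedPoint s₁ p r a +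
      (s₁ + p * a) ^ n * ((Wmap s₁ s₂ p q r a)^[2] (1 / 2) - secondBranchFixedPoint s₁ p r a) := by
  rw [Function.iterate_add_apply]
  refine iterate_eq_add_pow_mul_sub (zero_le_one.trans hS.le) hle fun j hj hle_fixed => ?_
  refine Wmap_eq_fixedPoint_add_mul_sub hS.ne' ?_
    (hle_fixed.trans_lt (secondBranchFixedPoint_lt_half hS hra))
  rw [← Function.iterate_add_apply]
  exact (lt_Wmap_iterate_of_lt_kIndex (by omega) (by omega)).le

theorem second_iterate_sub_fixedPoint (hS : s₁ + p * a ≠ 1) :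
    -(r * a) * (s₂ + q * a) + 1 / 2 + r * a - secondBranchFixedPoint s₁ p r a =
      -(r * a * ((s₁ + p * a) * (s₂ + q * a) - (s₁ + p * a) - (s₂ + q * a)) /
        (s₁ + p * a - 1)) := by
  have hS' : s₁ + p * a - 1 ≠ 0 := sub_ne_zero.2 hS
  rw [secondBranchFixedPoint]
  linear_combination r * a * (s₂ + q * a - 1) * mul_inv_cancel₀ hS'

theorem slope_excess_eq (h : s₁ * s₂ = s₁ + s₂) :
    (s₁ + p * a) * (s₂ + q * a) - (s₁ + p * a) - (s₂ + q * a) =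
      a * (q * (s₁ - 1) + p * (s₂ - 1) + p * q * a) := by
  linear_combination h

theorem Wmap_iterate_add_two_half_of_mul_eq_add {n : ℕ} (h : s₁ * s₂ = s₁ + s₂)
    (hS : 1 < s₁ + p * a) (hr : 0 < r) (ha : 0 < a)
    (hexcess : 0 ≤ q * (s₁ - 1) + p * (s₂ - 1) + p * q * a)
    (htwo : (Wmap s₁ s₂ p q r a)^[2] (1 / 2) = -(r * a) * (s₂ + q * a) + 1 / 2 + r * a)
    (hn : n + 2 ≤ kIndex s₁ s₂ p q r a) :
    (Wmap s₁ s₂ p q r a)^[n + 2] (1 / 2) =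
      -a ^ 2 * (s₁ + p * a) ^ n *
          ((r * (q * s₁ + p * s₂ - p - q) + r * p * q * a) / (s₁ + p * a - 1))
        + (s₁ - 1 + p * a - 2 * r * a) / (2 * (s₁ + p * a - 1)) := by
  have deviation : (Wmap s₁ s₂ p q r a)^[2] (1 / 2) - secondBranchFixedPoint s₁ p r a =
      -(r * a * (a * (q * (s₁ - 1) + p * (s₂ - 1) + p * q * a)) / (s₁ + p * a - 1)) := by
    rw [htwo, second_iterate_sub_fixedPoint hS.ne', slope_excess_eq h]
  have hle : (Wmap s₁ s₂ p q r a)^[2] (1 / 2) ≤ secondBranchFixedPoint s₁ p r a := by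
    rw [← sub_nonpos, deviation, neg_nonpos]
    exact div_nonneg (by positivity) (sub_pos.2 hS).le
  rw [Wmap_iterate_add_two_half hS (mul_pos hr ha) hle hn, deviation,
    secondBranchFixedPoint_eq_div hS.ne']
  ring

end Orbit

theorem eventually_small_parameter_bounds {s₁ s₂ p q : ℝ} (r : ℝ) (hs₁ : 1 < s₁) (hs₂ : 0 < s₂)
    (hpq : 0 < q * (s₁ - 1) + p * (s₂ - 1)) :
    ∀ᶠ a in 𝓝 (0 : ℝ), 1 < s₁ + p * a ∧ 0 < s₂ + q * a ∧ r * a * (s₂ + q * a) < 1 / 2 + r * a ∧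
      0 < q * (s₁ - 1) + p * (s₂ - 1) + p * q * a := by
  refine .and ?_ (.and ?_ (.and ?_ ?_)) <;>
    refine ContinuousAt.eventually_lt (by fun_prop) (by fun_prop) ?_ <;>
    simp [hs₁, hs₂, hpq]

theorem Wmap_iterates_formula_eq_one_general {s₁ s₂ p q r : ℝ} (hs : s₁.HolderConjugate s₂)
    (hr : 0 < r) (hpq : 0 < q * (s₁ - 1) + p * (s₂ - 1)) :
    ∃ a₀ > (0 : ℝ), ∀ a, 0 < a → a < a₀ →
      Wmap s₁ s₂ p q r a (1 / 2) = 1 / 2 + r * a ∧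
      (Wmap s₁ s₂ p q r a)^[2] (1 / 2) = -(r * a) * (s₂ + q * a) + 1 / 2 + r * a ∧
      ∀ m, 3 ≤ m → m ≤ kIndex s₁ s₂ p q r a →
        (Wmap s₁ s₂ p q r a)^[m] (1 / 2) =
          -a ^ 2 * (s₁ + p * a) ^ (m - 2) *
              ((r * (q * s₁ + p * s₂ - p - q) + r * p * q * a) / (s₁ + p * a - 1))
            + (s₁ - 1 + p * a - 2 * r * a) / (2 * (s₁ + p * a - 1)) := by
  obtain ⟨a₀, ha₀, hbounds⟩ := Metric.eventually_nhds_iff.1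
    (eventually_small_parameter_bounds r hs.lt hs.symm.pos hpq)
  refine ⟨a₀, ha₀, fun a ha hlt => ?_⟩
  obtain ⟨hS, hT, hsmall, hexcess⟩ := hbounds (by rwa [Real.dist_0_eq_abs, abs_of_pos ha])
  have hS_pos : 0 < s₁ + p * a := zero_lt_one.trans hS
  have hra : 0 ≤ r * a := (mul_pos hr ha).le
  have htwo := Wmap_iterate_two_half hS_pos hT hra hsmall
  refine ⟨Wmap_half hS_pos hT hra, htwo, fun m hm hk => ?_⟩
  obtain ⟨n, rfl⟩ := Nat.exists_eq_add_of_le' (Nat.le_of_succ_le hm)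
  exact Wmap_iterate_add_two_half_of_mul_eq_add hs.mul_eq_add hS hr ha hexcess.le htwo hk

/-- Lemma 3(I): if `1/s₁ + 1/s₂ = 1` and `a > 0` is sufficiently small, then the first
`k(a)` iterates of `1/2` under `W_a` are given by explicit formulas. -/
theorem Wmap_iterates_formula_eq_one
    (s₁ s₂ p q r : ℝ) (hs₁ : 1 < s₁) (hs₂ : 1 < s₂)
    (hp : 0 < p) (hq : 0 < q) (hr : 0 < r)
    (hsum : 1/s₁ + 1/s₂ = 1) :
    ∃ a₀ > (0:ℝ), ∀ a, 0 < a → a < a₀ →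
      Wmap s₁ s₂ p q r a (1/2) = 1/2 + r*a ∧
      (Wmap s₁ s₂ p q r a)^[2] (1/2) = -(r*a)*(s₂ + q*a) + 1/2 + r*a ∧
      ∀ m, 3 ≤ m → m ≤ kIndex s₁ s₂ p q r a →
        (Wmap s₁ s₂ p q r a)^[m] (1/2) =
          -a^2*(s₁ + p*a)^(m-2) * ((r*(q*s₁ + p*s₂ - p - q) + r*p*q*a)/(s₁ + p*a - 1))
            + (s₁ - 1 + p*a - 2*r*a)/(2*(s₁ + p*a - 1)) := by
  exact Wmap_iterates_formula_eq_one_general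
    (Real.holderConjugate_iff.2 ⟨hs₁, by simpa only [one_div] using hsum⟩) hr
    (add_pos (mul_pos hq (sub_pos.2 hs₁)) (mul_pos hp (sub_pos.2 hs₂)))
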